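/- Assume the form ⟨−,−⟩ is symmetric (and nondegenerate). Let H ⊆ V be a subspace with dim H = k and dim(H ∩ H^⊥) = k − r, and assume r = max{0, 2k − n}. Then the stabilizer S = {g ∈ End(V) : g is an isometry of V, det g = 1, and g(H) = H} is a connected subset of End(V). -/

import Mathlib

open Module

/-- Left orthogonal complement `H^⊥ = {v | ⟨v,w⟩ = 0 for all w ∈ H}` of a subspace with
respect to a bilinear form. -/
def bperp {V : Type*} [AddCommGroup V] [Module ℂ V]
    (B : V →ₗ[ℂ] V →ₗ[ℂ] ℂ) (H : Submodule ℂ V) : Submodule ℂ V where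
  carrier := {v | ∀ w ∈ H, B v w = 0}
  add_mem' := by
    intro a b ha hb w hw
    rw [map_add, LinearMap.add_apply, ha w hw, hb w hw, add_zero]
  zero_mem' := by
    intro w hw
    simp
  smul_mem' := by
    intro c a ha w hw
    rw [map_smul, LinearMap.smul_apply, ha w hw, smul_zero]

open scoped Ring

/-!
The Cayley transform `c(x) = (1 - x)(1 + x)⁻¹` exchanges the isometries preserving a subspace `K`
and without eigenvalue `-1` with the skew-adjoint `X` preserving `K` for which `1 + X` is
invertible. To reach an arbitrary `g` of determinant one, let `π` be the projection onto its
generalized `(-1)`-eigenspace `W` along the Fitting complement, and `ε = 1 - 2π`. Then `g ε` is an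
isometry without eigenvalue `-1`, so `det (g ε) = 1` and `W` is even-dimensional. If `K` is totally
isotropic, a Lagrangian of `W` containing `K ∩ W` yields a skew-adjoint `J` preserving `K` with
`J² = -π`, and `c(J)² = ε`. So every `g` in the stabilizer equals `c(X) c(J)²`, and the stabilizer
is the continuous image of `D × D`, where `D` is the set of skew-adjoint `X` preserving `K` with
`1 + X` invertible. For `X ∈ D` all but finitely many multiples `zX`, `z ∈ ℂ`, lie in `D`, so `D` is
connected.

The dimension condition says that `H` and `H^⊥` are comparable, so that one of them is totally
isotropic; both have the same stabilizer.
-/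

section Ring

variable {R S : Type*} [Ring R] [Ring S] {x y : R}

/-- The Cayley transform `(1 - x) (1 + x)⁻¹` of a ring element, meaningful when `1 + x` is
invertible. Over a quadratic space it exchanges skew-adjoint operators and isometries. -/
noncomputable def cayleyTransform (x : R) : R := (1 - x) * (1 + x)⁻¹ʳ

lemma eq_cayleyTransform_iff (hx : IsUnit (1 + x)) :
    y = cayleyTransform x ↔ y * (1 + x) = 1 - x :=
  Ring.eq_mul_inverse_iff_mul_eq _ _ _ hx

lemma cayleyTransform_mul_one_add (hx : IsUnit (1 + x)) :
    cayleyTransform x * (1 + x) = 1 - x :=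
  (eq_cayleyTransform_iff hx).1 rfl

lemma map_cayleyTransform (f : R →+* S) (hx : IsUnit (1 + x)) :
    f (cayleyTransform x) = cayleyTransform (f x) := by
  have hfx : IsUnit (1 + f x) := by simpa using hx.map f
  rw [eq_cayleyTransform_iff hfx]
  simpa using congrArg f (cayleyTransform_mul_one_add hx)

lemma one_add_cayleyTransform_mul_one_add (hx : IsUnit (1 + x)) :
    (1 + cayleyTransform x) * (1 + x) = 2 := by
  rw [add_mul, cayleyTransform_mul_one_add hx, one_mul, add_add_sub_cancel, one_add_one_eq_two]

lemma isUnit_one_add_cayleyTransform (h2 : IsUnit (2 : R)) (hx : IsUnit (1 + x)) :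
    IsUnit (1 + cayleyTransform x) := by
  rw [← one_add_cayleyTransform_mul_one_add hx] at h2
  exact hx.mul_right_iff.1 h2

lemma cayleyTransform_cayleyTransform (h2 : IsUnit (2 : R)) (hx : IsUnit (1 + x)) :
    cayleyTransform (cayleyTransform x) = x := by
  symm
  rw [eq_cayleyTransform_iff (isUnit_one_add_cayleyTransform h2 hx), ← hx.mul_left_inj, mul_assoc,
    one_add_cayleyTransform_mul_one_add hx, sub_mul, cayleyTransform_mul_one_add hx]
  noncomm_ring

lemma isUnit_one_add_of_cube_eq_neg (h2 : IsUnit (2 : R)) (hx : x ^ 3 = -x) :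
    IsUnit (1 + x) := by
  have hcomm : Commute (1 + x) (1 + 1 - x + x ^ 2) := by
    rw [commute_iff_eq]
    noncomm_ring
  have hmul : (1 + x) * (1 + 1 - x + x ^ 2) = 2 :=
    calc (1 + x) * (1 + 1 - x + x ^ 2) = 1 + 1 + (x ^ 3 + x) := by noncomm_ring
      _ = 2 := by rw [hx, neg_add_cancel, add_zero, one_add_one_eq_two]
  rw [← hmul] at h2
  exact (hcomm.isUnit_mul_iff.1 h2).1

lemma cayleyTransform_mul_self_of_cube_eq_neg (h2 : IsUnit (2 : R)) (hx : x ^ 3 = -x) :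
    cayleyTransform x * cayleyTransform x = 1 + 2 * x ^ 2 := by
  have hcayley : 1 - x + x ^ 2 = cayleyTransform x := by
    rw [eq_cayleyTransform_iff (isUnit_one_add_of_cube_eq_neg h2 hx)]
    calc (1 - x + x ^ 2) * (1 + x) = 1 + x ^ 3 := by noncomm_ring
      _ = 1 - x := by rw [hx, sub_eq_add_neg]
  have hx4 : x ^ 4 = -x ^ 2 := by rw [pow_succ, hx, neg_mul, sq]
  calc cayleyTransform x * cayleyTransform x
      = 1 - 2 * x + 3 * x ^ 2 - 2 * x ^ 3 + x ^ 4 := by rw [← hcayley]; noncomm_ring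
    _ = 1 + 2 * x ^ 2 := by rw [hx, hx4]; noncomm_ring

lemma one_sub_two_mul_mul_self_of_isIdempotentElem (hx : IsIdempotentElem x) :
    (1 - 2 * x) * (1 - 2 * x) = 1 := by
  calc (1 - 2 * x) * (1 - 2 * x) = 1 - 4 * x + 4 * (x * x) := by noncomm_ring
    _ = 1 := by rw [hx.eq, sub_add_cancel]

lemma isUnit_two_of_algebra (𝕜 : Type*) [Field 𝕜] [NeZero (2 : 𝕜)] [Algebra 𝕜 R] :
    IsUnit (2 : R) := by
  rw [← map_ofNat (algebraMap 𝕜 R) 2]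
  exact (IsUnit.mk0 _ two_ne_zero).map _

end Ring

section Endomorphism

variable {R M : Type*} [CommRing R] [AddCommGroup M] [Module R M]
  {K : Submodule R M} {f g : End R M}

/-- The algebra of endomorphisms that map the subspace `K` into itself. -/
def stabilizerSubalgebra (K : Submodule R M) : Subalgebra R (End R M) where
  carrier := {f | ∀ x ∈ K, f x ∈ K}
  mul_mem' hf hg x hx := hf _ (hg x hx)
  add_mem' hf hg x hx := K.add_mem (hf x hx) (hg x hx)
  algebraMap_mem' c _ hx := K.smul_mem c hx

lemma cayleyTransform_apply_add_apply (hunit : IsUnit (1 + f)) (v : M) :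
    cayleyTransform f (v + f v) = v - f v :=
  LinearMap.congr_fun (cayleyTransform_mul_one_add hunit) v

lemma exists_add_apply_eq (hunit : IsUnit (1 + f)) (v : M) : ∃ u, u + f u = v :=
  ((End.isUnit_iff _).1 hunit).surjective v

lemma one_add_pow_apply_of_apply_eq_self {w : M} (hw : g w = w) (m : ℕ) :
    ((1 + g) ^ m) w = (2 : R) ^ m • w := by
  induction m with
  | zero => simp
  | succ m ih => simp [pow_succ', ih, hw, two_mul, add_smul]

end Endomorphism

section FiniteDimensional

variable {𝕜 V : Type*} [Field 𝕜] [AddCommGroup V] [Module 𝕜 V] [FiniteDimensional 𝕜 V]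
  {K W W' : Submodule 𝕜 V} {f g : End 𝕜 V}

lemma map_eq_of_mem_stabilizerSubalgebra (hf : f ∈ stabilizerSubalgebra K)
    (hfK : Disjoint K (LinearMap.ker f)) : K.map f = K := by
  refine Submodule.eq_of_le_of_finrank_eq (Submodule.map_le_iff_le_comap.2 hf) ?_
  rw [← LinearMap.range_domRestrict]
  exact LinearMap.finrank_range_of_inj (LinearMap.injective_domRestrict_iff.2 hfK)

lemma map_eq_of_mem_stabilizerSubalgebra_of_isUnit (hf : f ∈ stabilizerSubalgebra K)
    (hunit : IsUnit f) : K.map f = K := by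
  apply map_eq_of_mem_stabilizerSubalgebra hf
  rw [(LinearMap.isUnit_iff_ker_eq_bot f).1 hunit]
  exact disjoint_bot_right

lemma ringInverse_mem_stabilizerSubalgebra (hf : f ∈ stabilizerSubalgebra K) (hunit : IsUnit f) :
    f⁻¹ʳ ∈ stabilizerSubalgebra K := by
  intro x hx
  rw [← map_eq_of_mem_stabilizerSubalgebra_of_isUnit hf hunit] at hx
  obtain ⟨y, hy, rfl⟩ := hx
  rwa [← End.mul_apply, Ring.inverse_mul_cancel f hunit]

lemma cayleyTransform_mem_stabilizerSubalgebra (hf : f ∈ stabilizerSubalgebra K)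
    (hunit : IsUnit (1 + f)) : cayleyTransform f ∈ stabilizerSubalgebra K :=
  mul_mem (sub_mem (one_mem _) hf)
    (ringInverse_mem_stabilizerSubalgebra (add_mem (one_mem _) hf) hunit)

lemma projection_ker_range_mem_stabilizerSubalgebra (hf : f ∈ stabilizerSubalgebra K)
    (hc : IsCompl (LinearMap.ker f) (LinearMap.range f)) :
    (LinearMap.ker f).projection (LinearMap.range f) hc ∈ stabilizerSubalgebra K := by
  intro x hx
  have hmapK : K.map f ≤ K := Submodule.map_le_iff_le_comap.2 hf
  have hmap : (K.map f).map f = K.map f :=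
    map_eq_of_mem_stabilizerSubalgebra (fun y hy => ⟨y, hmapK hy, rfl⟩)
      (hc.disjoint.symm.mono_left (LinearMap.map_le_range))
  obtain ⟨y, hy, hxy⟩ : f x ∈ (K.map f).map f := hmap.ge (Submodule.mem_map_of_mem hx)
  have hker : x - y ∈ LinearMap.ker f := LinearMap.sub_mem_ker_iff.2 hxy.symm
  have hproj : (LinearMap.ker f).projection (LinearMap.range f) hc x = x - y := by
    rw [← sub_add_cancel x y, map_add, Submodule.projection_apply_of_mem_left hc hker,
      (Submodule.projection_apply_eq_zero_iff hc).2 (LinearMap.map_le_range hy), add_zero,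
      sub_add_cancel]
  exact hproj ▸ K.sub_mem hx (hmapK hy)

lemma det_one_sub_two_mul_projection (hc : IsCompl W W') :
    LinearMap.det (1 - 2 * W.projection W' hc) = (-1) ^ finrank 𝕜 W := by
  let e := Submodule.prodEquivOfIsCompl W W' hc
  have hconj : (1 - 2 * W.projection W' hc : End 𝕜 V) =
      e.toLinearMap ∘ₗ LinearMap.prodMap ((-1 : 𝕜) • LinearMap.id) LinearMap.id ∘ₗ
        e.symm.toLinearMap := by
    ext x
    obtain ⟨⟨w, w'⟩, rfl⟩ := e.surjective x
    simp [e, two_mul, neg_add_eq_sub]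
  rw [hconj, LinearMap.det_conj, LinearMap.det_prodMap, LinearMap.det_smul, LinearMap.det_id,
    LinearMap.det_id, mul_one, mul_one]

-- The operator is `1 - g` on the generalized `(-1)`-eigenspace and `1 + g` on its complement.
lemma isUnit_one_add_mul_one_sub_two_mul_projection [NeZero (2 : 𝕜)] {N : ℕ} (hN : N ≠ 0)
    (hc : IsCompl (LinearMap.ker ((1 + g) ^ N)) (LinearMap.range ((1 + g) ^ N))) :
    IsUnit (1 + g * (1 - 2 * Submodule.projection _ _ hc)) := by
  rw [LinearMap.isUnit_iff_ker_eq_bot, LinearMap.ker_eq_bot']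
  intro x hx
  set f := (1 + g) ^ N with hf
  have hcomm : ∀ y, f (g y) = g (f y) := fun y =>
    LinearMap.congr_fun (((Commute.one_left g).add_left (Commute.refl g)).pow_left N).eq y
  set w := Submodule.projection _ _ hc x
  set u := x - w with hu
  have hw_mem : w ∈ LinearMap.ker f := Submodule.projection_apply_mem hc x
  have hu_mem : u ∈ LinearMap.range f := Submodule.sub_projection_mem hc x
  have hsum : (w - g w) + (u + g u) = 0 := by
    rw [← hx]
    simp only [hu, two_mul, map_sub, map_add, LinearMap.add_apply, LinearMap.sub_apply,
      End.one_apply, End.mul_apply]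
    abel
  have hw_sub : w - g w ∈ LinearMap.ker f := by
    rw [LinearMap.mem_ker, map_sub, hcomm, hw_mem, map_zero, sub_zero]
  have hu_add : u + g u ∈ LinearMap.range f := by
    obtain ⟨y, hy⟩ := hu_mem
    exact ⟨y + g y, by rw [map_add, hcomm, hy]⟩
  have hu_zero : u + g u = 0 :=
    Submodule.disjoint_def.1 hc.disjoint _ (eq_neg_of_add_eq_zero_right hsum ▸ neg_mem hw_sub)
      hu_add
  have hw_fixed : g w = w := by
    rw [hu_zero, add_zero] at hsum
    exact (sub_eq_zero.1 hsum).symm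
  have hw_eq : w = 0 := by
    rw [LinearMap.mem_ker, hf, one_add_pow_apply_of_apply_eq_self hw_fixed] at hw_mem
    exact (smul_eq_zero.1 hw_mem).resolve_left (pow_ne_zero N two_ne_zero)
  have hu_ker : u ∈ LinearMap.ker f := by
    rw [LinearMap.mem_ker, hf, ← Nat.succ_pred_eq_of_ne_zero hN, pow_succ]
    simp [hu_zero]
  rw [← sub_add_cancel x w, ← hu, Submodule.disjoint_def.1 hc.disjoint u hu_ker hu_mem, hw_eq,
    add_zero]

end FiniteDimensional

section BilinearForm

variable {R M : Type*} [CommRing R] [AddCommGroup M] [Module R M]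
  {B : LinearMap.BilinForm R M} {f g X : End R M}

lemma isOrthogonal_mul (hf : B.IsOrthogonal f) (hg : B.IsOrthogonal g) :
    B.IsOrthogonal (f * g : End R M) :=
  fun v w => (hf _ _).trans (hg v w)

lemma ker_eq_bot_of_isOrthogonal (hB : B.Nondegenerate) (hg : B.IsOrthogonal g) :
    LinearMap.ker g = ⊥ := by
  rw [LinearMap.ker_eq_bot']
  intro v hv
  refine hB.1 v fun w => ?_
  rw [← hg, hv, map_zero, LinearMap.zero_apply]

-- Induction on `N`, moving one factor across the form: `B (x, (1 + g) z) = B ((1 + g) x, g z)`.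
lemma apply_eq_zero_of_mem_ker_of_mem_range_one_add_pow (hg : B.IsOrthogonal g) (N : ℕ) {x y : M}
    (hx : x ∈ LinearMap.ker ((1 + g) ^ N)) (hy : y ∈ LinearMap.range ((1 + g) ^ N)) :
    B x y = 0 := by
  obtain ⟨z, rfl⟩ := hy
  induction N generalizing x z with
  | zero =>
    rw [pow_zero, LinearMap.mem_ker, End.one_apply] at hx
    rw [hx, map_zero, LinearMap.zero_apply]
  | succ N ih =>
    have hgz : g (((1 + g) ^ N) z) = ((1 + g) ^ N) (g z) :=
      LinearMap.congr_fun (((Commute.one_right g).add_right (Commute.refl g)).pow_right N).eq z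
    have hshift : B x ((1 + g) (((1 + g) ^ N) z)) = B ((1 + g) x) (g (((1 + g) ^ N) z)) := by
      simp only [LinearMap.add_apply, End.one_apply, map_add, hg x _, add_comm]
    rw [LinearMap.mem_ker, pow_succ, End.mul_apply] at hx
    rw [pow_succ', End.mul_apply, hshift, hgz]
    exact ih hx (g z)

lemma isOrthogonal_cayleyTransform (hX : B.IsSkewAdjoint X) (hunit : IsUnit (1 + X)) :
    B.IsOrthogonal (cayleyTransform X : End R M) := by
  intro v w
  obtain ⟨v, rfl⟩ := exists_add_apply_eq hunit v
  obtain ⟨w, rfl⟩ := exists_add_apply_eq hunit w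
  have hskew : ∀ u u', B (X u) u' = -B u (X u') := fun u u' => by
    rw [hX u u', Pi.neg_apply, map_neg]
  simp only [cayleyTransform_apply_add_apply hunit, map_sub, map_add, LinearMap.sub_apply,
    LinearMap.add_apply, hskew]
  ring

lemma isSkewAdjoint_cayleyTransform (hg : B.IsOrthogonal g) (hunit : IsUnit (1 + g)) :
    B.IsSkewAdjoint (cayleyTransform g : End R M) := by
  intro v w
  obtain ⟨v, rfl⟩ := exists_add_apply_eq hunit v
  obtain ⟨w, rfl⟩ := exists_add_apply_eq hunit w
  simp only [Pi.neg_apply, cayleyTransform_apply_add_apply hunit, map_neg, map_sub, map_add,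
    LinearMap.sub_apply, LinearMap.add_apply, hg v w]
  ring

end BilinearForm

section Determinant

variable {𝕜 V : Type*} [Field 𝕜] [AddCommGroup V] [Module 𝕜 V] [FiniteDimensional 𝕜 V]
  {B : LinearMap.BilinForm 𝕜 V} {f g X : End 𝕜 V}

lemma isUnit_of_isOrthogonal (hB : B.Nondegenerate) (hg : B.IsOrthogonal g) : IsUnit g :=
  (LinearMap.isUnit_iff_ker_eq_bot g).2 (ker_eq_bot_of_isOrthogonal hB hg)

lemma det_eq_det_of_isAdjointPair (hB : B.Nondegenerate) (hfg : LinearMap.IsAdjointPair B B f g) :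
    LinearMap.det f = LinearMap.det g := by
  have hconj : g.dualMap = B.toDual hB ∘ₗ f ∘ₗ (B.toDual hB).symm.toLinearMap := by
    ext φ w
    obtain ⟨v, rfl⟩ := (B.toDual hB).surjective φ
    simp [LinearMap.BilinForm.toDual_def, hfg v w]
  rw [← LinearMap.det_dualMap g, hconj, LinearMap.det_conj]

lemma det_cayleyTransform (hB : B.Nondegenerate) (hX : B.IsSkewAdjoint X)
    (hunit : IsUnit (1 + X)) : LinearMap.det (cayleyTransform X) = 1 := by
  have hadj : LinearMap.IsAdjointPair B B (1 - X : End 𝕜 V) (1 + X : End 𝕜 V) := by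
    intro v w
    simp [hX v w]
  have hdet := congrArg LinearMap.det (cayleyTransform_mul_one_add hunit)
  rw [map_mul, det_eq_det_of_isAdjointPair hB hadj] at hdet
  exact (hunit.map LinearMap.det).mul_eq_right.1 hdet

lemma det_eq_one_of_isOrthogonal [NeZero (2 : 𝕜)] (hB : B.Nondegenerate)
    (hg : B.IsOrthogonal g) (hunit : IsUnit (1 + g)) : LinearMap.det g = 1 := by
  have h2 : IsUnit (2 : End 𝕜 V) := isUnit_two_of_algebra 𝕜
  rw [← cayleyTransform_cayleyTransform h2 hunit]
  exact det_cayleyTransform hB (isSkewAdjoint_cayleyTransform hg hunit)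
    (isUnit_one_add_cayleyTransform h2 hunit)

end Determinant

section Stabilizer

variable {R M : Type*} [CommRing R] [AddCommGroup M] [Module R M]
  {B : LinearMap.BilinForm R M} {K : Submodule R M} {g X : End R M}

/-- The stabilizer of the subspace `K` in the special orthogonal group of `B`. It is only a
submonoid of `End R M` in general; if `B` is nondegenerate and `M` finite-dimensional its elements
are invertible and map `K` onto itself. -/
def specialOrthogonalStabilizer (B : LinearMap.BilinForm R M) (K : Submodule R M) :
    Submonoid (End R M) where
  carrier := {g | B.IsOrthogonal g ∧ LinearMap.det g = 1 ∧ g ∈ stabilizerSubalgebra K}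
  one_mem' := ⟨fun _ _ => rfl, map_one _, one_mem _⟩
  mul_mem' := fun ⟨hf, hfdet, hfK⟩ ⟨hg, hgdet, hgK⟩ =>
    ⟨isOrthogonal_mul hf hg, by rw [map_mul, hfdet, hgdet, one_mul], mul_mem hfK hgK⟩

/-- The skew-adjoint operators that map the subspace `K` into itself, i.e. the Lie algebra of
`specialOrthogonalStabilizer B K`. -/
def skewAdjointStabilizer (B : LinearMap.BilinForm R M) (K : Submodule R M) :
    Submodule R (End R M) :=
  B.skewAdjointSubmodule ⊓ (stabilizerSubalgebra K).toSubmodule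

lemma mem_specialOrthogonalStabilizer : g ∈ specialOrthogonalStabilizer B K ↔
    B.IsOrthogonal g ∧ LinearMap.det g = 1 ∧ g ∈ stabilizerSubalgebra K := Iff.rfl

lemma mem_skewAdjointStabilizer :
    X ∈ skewAdjointStabilizer B K ↔ B.IsSkewAdjoint X ∧ X ∈ stabilizerSubalgebra K := by
  rw [skewAdjointStabilizer, Submodule.mem_inf, LinearMap.mem_skewAdjointSubmodule,
    Subalgebra.mem_toSubmodule]

end Stabilizer

section FiniteDimensional

variable {𝕜 V : Type*} [Field 𝕜] [AddCommGroup V] [Module 𝕜 V] [FiniteDimensional 𝕜 V]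
  {B : LinearMap.BilinForm 𝕜 V} {K : Submodule 𝕜 V} {g X : End 𝕜 V}

lemma cayleyTransform_mem_specialOrthogonalStabilizer (hB : B.Nondegenerate)
    (hX : X ∈ skewAdjointStabilizer B K) (hunit : IsUnit (1 + X)) :
    cayleyTransform X ∈ specialOrthogonalStabilizer B K :=
  have ⟨hskew, hXK⟩ := mem_skewAdjointStabilizer.1 hX
  ⟨isOrthogonal_cayleyTransform hskew hunit, det_cayleyTransform hB hskew hunit,
    cayleyTransform_mem_stabilizerSubalgebra hXK hunit⟩

lemma cayleyTransform_mem_skewAdjointStabilizer (hg : g ∈ specialOrthogonalStabilizer B K)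
    (hunit : IsUnit (1 + g)) : cayleyTransform g ∈ skewAdjointStabilizer B K :=
  mem_skewAdjointStabilizer.2 ⟨isSkewAdjoint_cayleyTransform hg.1 hunit,
    cayleyTransform_mem_stabilizerSubalgebra hg.2.2 hunit⟩

lemma mem_specialOrthogonalStabilizer_iff_map_eq (hB : B.Nondegenerate) :
    g ∈ specialOrthogonalStabilizer B K ↔
      Function.Bijective g ∧ B.IsOrthogonal g ∧ LinearMap.det g = 1 ∧ K.map g = K := by
  constructor
  · rintro ⟨hg, hdet, hgK⟩
    have hunit := isUnit_of_isOrthogonal hB hg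
    exact ⟨(End.isUnit_iff g).1 hunit, hg, hdet,
      map_eq_of_mem_stabilizerSubalgebra_of_isUnit hgK hunit⟩
  · rintro ⟨-, hg, hdet, hgK⟩
    exact ⟨hg, hdet, fun x hx => hgK.le (Submodule.mem_map_of_mem hx)⟩

lemma specialOrthogonalStabilizer_le_orthogonal (hB : B.Nondegenerate) :
    specialOrthogonalStabilizer B K ≤ specialOrthogonalStabilizer B (B.orthogonal K) := by
  intro g hg
  obtain ⟨-, -, -, hmap⟩ := (mem_specialOrthogonalStabilizer_iff_map_eq hB).1 hg
  refine ⟨hg.1, hg.2.1, fun x hx y hy => ?_⟩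
  obtain ⟨z, hz, rfl⟩ := hmap.ge hy
  exact (hg.1 z x).trans (hx z hz)

lemma specialOrthogonalStabilizer_orthogonal (hB : B.Nondegenerate) (hrefl : B.IsRefl) :
    specialOrthogonalStabilizer B (B.orthogonal K) = specialOrthogonalStabilizer B K := by
  refine le_antisymm ?_ (specialOrthogonalStabilizer_le_orthogonal hB)
  simpa only [LinearMap.BilinForm.orthogonal_orthogonal hB hrefl] using
    specialOrthogonalStabilizer_le_orthogonal (K := B.orthogonal K) hB

end FiniteDimensional

section Lagrangian

variable {𝕜 V : Type*} [Field 𝕜] [IsAlgClosed 𝕜] [NeZero (2 : 𝕜)]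
  [AddCommGroup V] [Module 𝕜 V] [FiniteDimensional 𝕜 V]
  {B : LinearMap.BilinForm 𝕜 V} {K L M : Submodule 𝕜 V}

lemma exists_isotropic_notMem (hLM : L ≤ M) (hdim : finrank 𝕜 L + 2 ≤ finrank 𝕜 M) :
    ∃ x ∈ M, x ∉ L ∧ B x x = 0 := by
  have hlt : L < M := by
    refine hLM.lt_of_ne ?_
    rintro rfl
    omega
  obtain ⟨b, hbM, hbL⟩ := SetLike.exists_of_lt hlt
  by_cases hbb : B b b = 0
  · exact ⟨b, hbM, hbL, hbb⟩
  have hnotle : ¬ M ≤ L ⊔ 𝕜 ∙ b := by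
    intro hle
    have h₁ := Submodule.finrank_mono hle
    have h₂ := Submodule.finrank_add_le_finrank_add_finrank L (𝕜 ∙ b)
    have h₃ := finrank_span_singleton (K := 𝕜) (ne_of_mem_of_not_mem L.zero_mem hbL).symm
    omega
  obtain ⟨a, haM, haL⟩ := SetLike.not_le_iff_exists.1 hnotle
  obtain ⟨s, hs⟩ := IsAlgClosed.exists_eq_mul_self (discrim (B b b) (B a b + B b a) (B a a))
  obtain ⟨t, ht⟩ := exists_quadratic_eq_zero hbb ⟨s, hs⟩
  refine ⟨a + t • b, M.add_mem haM (M.smul_mem t hbM), fun h => haL ?_, ?_⟩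
  · rw [← add_sub_cancel_right a (t • b)]
    exact sub_mem (Submodule.mem_sup_left h) (Submodule.mem_sup_right
      (Submodule.smul_mem _ _ (Submodule.mem_span_singleton_self b)))
  · simp only [map_add, map_smul, LinearMap.add_apply, LinearMap.smul_apply, smul_eq_mul]
    linear_combination ht

lemma exists_lagrangian_ge (hB : B.Nondegenerate) (hsymm : B.IsSymm)
    (heven : Even (finrank 𝕜 V)) (hK : K ≤ B.orthogonal K) :
    ∃ L, K ≤ L ∧ B.orthogonal L = L := by
  obtain ⟨L, hKL, hL⟩ := exists_maximal_ge_of_wellFoundedGT (fun L => L ≤ B.orthogonal L) K hK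
  refine ⟨L, hKL, ?_⟩
  by_contra hne
  have hlt : finrank 𝕜 L < finrank 𝕜 (B.orthogonal L) :=
    Submodule.finrank_lt_finrank_of_lt (hL.prop.lt_of_ne' hne)
  have hdim := LinearMap.BilinForm.finrank_orthogonal hB L
  obtain ⟨x, hx, hxL, hxx⟩ := exists_isotropic_notMem (B := B) hL.prop
    (by obtain ⟨m, hm⟩ := heven; have := L.finrank_le; omega)
  have hiso : L ⊔ 𝕜 ∙ x ≤ B.orthogonal (L ⊔ 𝕜 ∙ x) := by
    intro v hv w hw
    obtain ⟨l, hl, c, rfl⟩ : ∃ l ∈ L, ∃ c : 𝕜, l + c • x = v := by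
      simpa [Submodule.mem_sup, Submodule.mem_span_singleton] using hv
    obtain ⟨l', hl', c', rfl⟩ : ∃ l ∈ L, ∃ c : 𝕜, l + c • x = w := by
      simpa [Submodule.mem_sup, Submodule.mem_span_singleton] using hw
    have hll : B l' l = 0 := hL.prop hl l' hl'
    have hlx : B l' x = 0 := hx l' hl'
    have hxl : B x l = 0 := (hsymm.eq x l).trans (hx l hl)
    simp [hll, hlx, hxl, hxx]
  exact hxL (hL.le_of_ge hiso le_sup_left
    (Submodule.mem_sup_right (Submodule.mem_span_singleton_self x)))

-- Let `P` be a projection onto a Lagrangian `L ⊇ K` and `P*` its adjoint. As `L` is isotropic,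
-- `P* P = 0`; as `L` is its own orthogonal complement, `(1 - P) (1 - P*) = 0`. Hence
-- `(P - P*)² = 1`, and `i (P - P*)` is the required complex structure.
lemma exists_mem_skewAdjointStabilizer_sq_eq_neg_one (hB : B.Nondegenerate) (hsymm : B.IsSymm)
    (heven : Even (finrank 𝕜 V)) (hK : K ≤ B.orthogonal K) :
    ∃ J ∈ skewAdjointStabilizer B K, J ^ 2 = -1 := by
  obtain ⟨L, hKL, hL⟩ := exists_lagrangian_ge hB hsymm heven hK
  obtain ⟨L', hc⟩ := L.exists_isCompl
  obtain ⟨i, hi⟩ := IsAlgClosed.exists_eq_mul_self (-1 : 𝕜)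
  set P : End 𝕜 V := L.projection L' hc
  set Q : End 𝕜 V := B.leftAdjointOfNondegenerate hB P
  have hadj : LinearMap.IsAdjointPair B B Q P :=
    B.isAdjointPairLeftAdjointOfNondegenerate hB P
  have hadj' : LinearMap.IsAdjointPair B B P Q := fun v w => by
    rw [hsymm.eq, ← hadj, hsymm.eq]
  have hPL : ∀ l ∈ L, P l = l := fun l => Submodule.projection_apply_of_mem_left hc
  have hQP : Q * P = 0 := LinearMap.ext fun v => hB.1 _ fun w => by
    rw [End.mul_apply, hadj]
    exact hL.ge (Submodule.projection_apply_mem hc w) _ (Submodule.projection_apply_mem hc v)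
  have hPQ : P * (1 - Q) = 1 - Q := LinearMap.ext fun v => by
    refine hPL _ (hL.le fun l hl => ?_)
    rw [LinearMap.sub_apply, End.one_apply, map_sub, ← hadj', hPL l hl, sub_self]
  have hPP : P * P = P := Submodule.isIdempotentElem_projection hc
  have hQQ : Q * Q = Q :=
    B.isAdjointPair_unique_of_nondegenerate hB P _ _ (by simpa only [hPP] using hadj.mul hadj) hadj
  have hsq : (P - Q) ^ 2 = 1 :=
    calc (P - Q) ^ 2 = P * P + P * (1 - Q) - P - Q * P + Q * Q := by noncomm_ring
      _ = 1 := by rw [hPP, hPQ, hQP, hQQ]; abel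
  refine ⟨i • (P - Q), mem_skewAdjointStabilizer.2 ⟨fun v w => ?_, fun x hx => ?_⟩, ?_⟩
  · simp only [LinearMap.smul_apply, LinearMap.sub_apply, map_smul, map_sub, Pi.neg_apply,
      hadj v w, hadj' v w, smul_sub, neg_sub]
  · have hQx : Q x = 0 := by
      rw [← hPL x (hKL hx)]
      exact LinearMap.congr_fun hQP x
    rw [LinearMap.smul_apply, LinearMap.sub_apply, hPL x (hKL hx), hQx, sub_zero]
    exact K.smul_mem i hx
  · rw [smul_pow, hsq, sq, ← hi, neg_one_smul]

end Lagrangian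

section OrthogonalDecomposition

variable {R M : Type*} [CommRing R] [AddCommGroup M] [Module R M]
  {B : LinearMap.BilinForm R M} {W W' : Submodule R M}

lemma nondegenerate_restrict_of_isCompl (hB : B.Nondegenerate) (hrefl : B.IsRefl)
    (hc : IsCompl W W') (horth : ∀ x ∈ W, ∀ y ∈ W', B x y = 0) :
    (B.restrict W).Nondegenerate := by
  refine B.nondegenerate_restrict_of_disjoint_orthogonal hrefl (Submodule.disjoint_def.2 ?_)
  intro x hxW hx
  refine hB.1 x fun v => ?_
  obtain ⟨w, hw, w', hw', rfl⟩ := Submodule.mem_sup.1 (hc.sup_eq_top ▸ Submodule.mem_top (x := v))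
  rw [map_add, hrefl _ _ (hx w hw), horth x hxW w' hw', add_zero]

lemma apply_projection_right (hc : IsCompl W W') (horth : ∀ x ∈ W, ∀ y ∈ W', B x y = 0)
    {x : M} (hx : x ∈ W) (y : M) : B x (W.projection W' hc y) = B x y := by
  rw [eq_comm, ← sub_eq_zero, ← map_sub]
  exact horth x hx _ (Submodule.sub_projection_mem hc y)

lemma apply_projection_left (hrefl : B.IsRefl) (hc : IsCompl W W')
    (horth : ∀ x ∈ W, ∀ y ∈ W', B x y = 0) (x : M) {y : M} (hy : y ∈ W) :
    B (W.projection W' hc x) y = B x y := by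
  rw [eq_comm, ← sub_eq_zero, ← LinearMap.sub_apply, ← map_sub]
  exact hrefl _ _ (horth y hy _ (Submodule.sub_projection_mem hc x))

lemma isOrthogonal_one_sub_two_mul_projection (hrefl : B.IsRefl) (hc : IsCompl W W')
    (horth : ∀ x ∈ W, ∀ y ∈ W', B x y = 0) :
    B.IsOrthogonal (1 - 2 * W.projection W' hc : End R M) := by
  intro v w
  set π := W.projection W' hc
  have hleft : B v (π w) = B (π v) (π w) :=
    (apply_projection_left hrefl hc horth v (Submodule.projection_apply_mem hc w)).symm
  have hright : B (π v) w = B (π v) (π w) :=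
    (apply_projection_right hc horth (Submodule.projection_apply_mem hc v) w).symm
  simp only [two_mul, LinearMap.sub_apply, LinearMap.add_apply, End.one_apply, map_sub, map_add,
    hleft, hright]
  ring

end OrthogonalDecomposition

section CayleyDecomposition

variable {𝕜 V : Type*} [Field 𝕜] [IsAlgClosed 𝕜] [NeZero (2 : 𝕜)]
  [AddCommGroup V] [Module 𝕜 V] [FiniteDimensional 𝕜 V]
  {B : LinearMap.BilinForm 𝕜 V} {K W W' : Submodule 𝕜 V} {g : End 𝕜 V}

lemma exists_mem_skewAdjointStabilizer_sq_eq_neg_projection (hB : B.Nondegenerate)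
    (hsymm : B.IsSymm) (hc : IsCompl W W') (horth : ∀ x ∈ W, ∀ y ∈ W', B x y = 0)
    (heven : Even (finrank 𝕜 W)) (hK : K ≤ B.orthogonal K)
    (hproj : W.projection W' hc ∈ stabilizerSubalgebra K) :
    ∃ J ∈ skewAdjointStabilizer B K, J ^ 2 = -W.projection W' hc ∧ J ^ 3 = -J := by
  obtain ⟨J₀, hJ₀, hsq⟩ := exists_mem_skewAdjointStabilizer_sq_eq_neg_one (K := K.comap W.subtype)
    (nondegenerate_restrict_of_isCompl hB hsymm.isRefl hc horth) (hsymm.restrict W) heven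
    (fun x hx y hy => hK hx y hy)
  obtain ⟨hskew, hJ₀K⟩ := mem_skewAdjointStabilizer.1 hJ₀
  set π := W.projection W' hc
  let ρ := W.projectionOnto W' hc
  let J : End 𝕜 V := W.subtype ∘ₗ J₀ ∘ₗ ρ
  have hJW : ∀ v, J v ∈ W := fun v => (J₀ (ρ v)).2
  have hπJ : π * J = J := LinearMap.ext fun v => Submodule.projection_apply_of_mem_left hc (hJW v)
  have hJsq : J ^ 2 = -π := by
    ext v
    have hρ : ρ (J₀ (ρ v)) = J₀ (ρ v) := Submodule.projectionOnto_apply_left hc _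
    have hJ₀sq : J₀ (J₀ (ρ v)) = -ρ v := by
      simpa only [sq, End.mul_apply, LinearMap.neg_apply, End.one_apply] using
        LinearMap.congr_fun hsq (ρ v)
    change ((J₀ (ρ (J₀ (ρ v)))) : V) = -(ρ v : V)
    rw [hρ, hJ₀sq, Submodule.coe_neg]
  refine ⟨J, mem_skewAdjointStabilizer.2 ⟨fun v w => ?_, fun x hx => ?_⟩, hJsq, ?_⟩
  · calc B (J v) w = B (J v) (π w) := (apply_projection_right hc horth (hJW v) w).symm
      _ = B (π v) (-J w) := hskew (ρ v) (ρ w)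
      _ = B v (-J w) := apply_projection_left hsymm.isRefl hc horth v (neg_mem (hJW w))
  · exact hJ₀K (ρ x) (hproj x hx)
  · rw [pow_succ, hJsq, neg_mul, hπJ]

lemma exists_eq_cayleyTransform_mul (hB : B.Nondegenerate) (hsymm : B.IsSymm)
    (hK : K ≤ B.orthogonal K) (hg : g ∈ specialOrthogonalStabilizer B K) :
    ∃ X ∈ skewAdjointStabilizer B K, ∃ Y ∈ skewAdjointStabilizer B K,
      IsUnit (1 + X) ∧ IsUnit (1 + Y) ∧
        g = cayleyTransform X * (cayleyTransform Y * cayleyTransform Y) := by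
  obtain ⟨hiso, hdet, hgK⟩ := mem_specialOrthogonalStabilizer.1 hg
  have h2 : IsUnit (2 : End 𝕜 V) := isUnit_two_of_algebra 𝕜
  obtain ⟨N, hN, hc⟩ : ∃ N ≠ 0,
      IsCompl (LinearMap.ker ((1 + g) ^ N)) (LinearMap.range ((1 + g) ^ N)) := by
    obtain ⟨N, hN⟩ := Filter.eventually_atTop.1 (1 + g).eventually_isCompl_ker_pow_range_pow
    exact ⟨N + 1, N.succ_ne_zero, hN _ N.le_succ⟩
  set π := Submodule.projection _ _ hc
  set ε : End 𝕜 V := 1 - 2 * π with hε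
  have horth : ∀ x ∈ LinearMap.ker ((1 + g) ^ N), ∀ y ∈ LinearMap.range ((1 + g) ^ N), B x y = 0 :=
    fun _ hx _ hy => apply_eq_zero_of_mem_ker_of_mem_range_one_add_pow hiso N hx hy
  have hπK : π ∈ stabilizerSubalgebra K :=
    projection_ker_range_mem_stabilizerSubalgebra (pow_mem (add_mem (one_mem _) hgK) N) hc
  have hunit : IsUnit (1 + g * ε) := isUnit_one_add_mul_one_sub_two_mul_projection hN hc
  have hεiso : B.IsOrthogonal ε := isOrthogonal_one_sub_two_mul_projection hsymm.isRefl hc horth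
  have hdet_gε : LinearMap.det (g * ε) = 1 :=
    det_eq_one_of_isOrthogonal hB (isOrthogonal_mul hiso hεiso) hunit
  have hgε : g * ε ∈ specialOrthogonalStabilizer B K :=
    ⟨isOrthogonal_mul hiso hεiso, hdet_gε,
      mul_mem hgK (sub_mem (one_mem _) (mul_mem (ofNat_mem _ 2) hπK))⟩
  have heven : Even (finrank 𝕜 (LinearMap.ker ((1 + g) ^ N))) := by
    rw [map_mul, hdet, one_mul, det_one_sub_two_mul_projection] at hdet_gε
    have hneg : (-1 : 𝕜) ≠ 1 := fun h => two_ne_zero (α := 𝕜) (by linear_combination -h)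
    exact (neg_one_pow_eq_one_iff_even hneg).1 hdet_gε
  obtain ⟨J, hJ, hJsq, hJcube⟩ :=
    exists_mem_skewAdjointStabilizer_sq_eq_neg_projection hB hsymm hc horth heven hK hπK
  refine ⟨cayleyTransform (g * ε), cayleyTransform_mem_skewAdjointStabilizer hgε hunit, J, hJ,
    isUnit_one_add_cayleyTransform h2 hunit, isUnit_one_add_of_cube_eq_neg h2 hJcube, ?_⟩
  have hεsq : ε * ε = 1 :=
    one_sub_two_mul_mul_self_of_isIdempotentElem (Submodule.isIdempotentElem_projection hc)
  rw [cayleyTransform_cayleyTransform h2 hunit, cayleyTransform_mul_self_of_cube_eq_neg h2 hJcube,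
    hJsq, mul_neg, ← sub_eq_add_neg, ← hε, mul_assoc, hεsq, mul_one]

end CayleyDecomposition

section Spectrum

variable {𝕜 A : Type*} [Field 𝕜] [Ring A] [Algebra 𝕜 A] {a : A}

lemma finite_spectrum_of_isIntegral (ha : IsIntegral 𝕜 a) : (spectrum 𝕜 a).Finite := by
  nontriviality A
  refine ((minpoly 𝕜 a).rootSet_finite 𝕜).subset fun r hr => ?_
  have hmem := spectrum.subset_polynomial_aeval a (minpoly 𝕜 a) (Set.mem_image_of_mem _ hr)
  rw [minpoly.aeval, spectrum.zero_eq, Set.mem_singleton_iff] at hmem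
  exact (Polynomial.mem_rootSet_of_ne (minpoly.ne_zero ha)).2 (by simpa using hmem)

lemma finite_setOf_not_isUnit_one_add_smul (ha : IsIntegral 𝕜 a) :
    {z : 𝕜 | ¬ IsUnit (1 + z • a)}.Finite := by
  refine ((finite_spectrum_of_isIntegral ha).image fun r => -r⁻¹).subset fun z hz => ?_
  have hz0 : z ≠ 0 := by
    rintro rfl
    simp at hz
  refine ⟨-z⁻¹, fun hunit => hz ?_, by simp⟩
  have hsmul : 1 + z • a = Units.mk0 (-z) (neg_ne_zero.2 hz0) • (algebraMap 𝕜 A (-z⁻¹) - a) := by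
    simp [Units.smul_def, smul_sub, Algebra.algebraMap_eq_smul_one, smul_smul, hz0]
  exact hsmul ▸ hunit.smul _

end Spectrum

section Topology

lemma isPreconnected_setOf_mem_and_isUnit_one_add {A : Type*} [Ring A] [Algebra ℂ A]
    [Algebra.IsIntegral ℂ A] [TopologicalSpace A] [ContinuousSMul ℂ A] (𝔰 : Submodule ℂ A) :
    IsPreconnected {x | x ∈ 𝔰 ∧ IsUnit (1 + x)} := by
  refine isPreconnected_of_forall 0 fun x ⟨hx, hunit⟩ => ?_
  have hconn : IsConnected {z : ℂ | ¬ IsUnit (1 + z • x)}ᶜ :=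
    (finite_setOf_not_isUnit_one_add_smul
      (Algebra.IsIntegral.isIntegral x)).countable.isConnected_compl_of_one_lt_rank
      (by rw [Complex.rank_real_complex]; exact Nat.one_lt_ofNat)
  refine ⟨(· • x) '' {z : ℂ | ¬ IsUnit (1 + z • x)}ᶜ, ?_, ⟨0, by simp⟩, ⟨1, by simpa using hunit⟩,
    hconn.isPreconnected.image _ (continuous_id.smul continuous_const).continuousOn⟩
  rintro _ ⟨z, hz, rfl⟩
  exact ⟨𝔰.smul_mem z hx, not_not.1 hz⟩

lemma continuousOn_cayleyTransform {A : Type*} [NormedRing A] [HasSummableGeomSeries A] :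
    ContinuousOn cayleyTransform {x : A | IsUnit (1 + x)} := by
  rintro x ⟨u, hu⟩
  have hinv : ContinuousAt Ring.inverse (1 + x) := hu ▸ NormedRing.inverse_continuousAt u
  exact ((continuousAt_const.sub continuousAt_id).mul
    (hinv.comp (f := (1 + ·)) (continuousAt_const.add continuousAt_id))).continuousWithinAt

variable {V : Type*} [NormedAddCommGroup V] [NormedSpace ℂ V] [FiniteDimensional ℂ V]
  {B : LinearMap.BilinForm ℂ V} {K : Submodule ℂ V}

lemma coe_mem_specialOrthogonalStabilizer_iff_exists_cayleyTransform (hB : B.Nondegenerate)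
    (hsymm : B.IsSymm) (hK : K ≤ B.orthogonal K) {g : V →L[ℂ] V} :
    (g : End ℂ V) ∈ specialOrthogonalStabilizer B K ↔
      ∃ X Y : V →L[ℂ] V,
        ((X : End ℂ V) ∈ skewAdjointStabilizer B K ∧ IsUnit (1 + X)) ∧
        ((Y : End ℂ V) ∈ skewAdjointStabilizer B K ∧ IsUnit (1 + Y)) ∧
        cayleyTransform X * (cayleyTransform Y * cayleyTransform Y) = g := by
  let φ : (V →L[ℂ] V) ≃ₐ[ℂ] End ℂ V := (End.toContinuousLinearMap V).symm
  have hunit (X : V →L[ℂ] V) : IsUnit (1 + φ X) ↔ IsUnit (1 + X) := isUnit_map_iff φ (1 + X)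
  have hcayley {X : V →L[ℂ] V} (hX : IsUnit (1 + X)) :
      φ (cayleyTransform X) = cayleyTransform (φ X) :=
    map_cayleyTransform φ.toRingHom hX
  constructor
  · intro hg
    obtain ⟨X, hX, Y, hY, hX1, hY1, hgXY⟩ := exists_eq_cayleyTransform_mul hB hsymm hK hg
    obtain ⟨X, rfl⟩ := φ.surjective X
    obtain ⟨Y, rfl⟩ := φ.surjective Y
    rw [hunit] at hX1 hY1
    refine ⟨X, Y, ⟨hX, hX1⟩, ⟨hY, hY1⟩, φ.injective ?_⟩
    rw [map_mul, map_mul, hcayley hX1, hcayley hY1]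
    exact hgXY.symm
  · rintro ⟨X, Y, ⟨hX, hX1⟩, ⟨hY, hY1⟩, rfl⟩
    have hcayley_mem {Z : V →L[ℂ] V} (hZ : φ Z ∈ skewAdjointStabilizer B K)
        (hZ1 : IsUnit (1 + Z)) : φ (cayleyTransform Z) ∈ specialOrthogonalStabilizer B K :=
      hcayley hZ1 ▸ cayleyTransform_mem_specialOrthogonalStabilizer hB hZ ((hunit Z).2 hZ1)
    exact mul_mem (hcayley_mem hX hX1) (mul_mem (hcayley_mem hY hY1) (hcayley_mem hY hY1))

theorem isConnected_specialOrthogonalStabilizer (hB : B.Nondegenerate) (hsymm : B.IsSymm)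
    (hK : K ≤ B.orthogonal K) :
    IsConnected {g : V →L[ℂ] V | (g : End ℂ V) ∈ specialOrthogonalStabilizer B K} := by
  refine ⟨⟨1, one_mem (specialOrthogonalStabilizer B K)⟩, ?_⟩
  have : CompleteSpace V := FiniteDimensional.complete ℂ V
  let D := {X : V →L[ℂ] V | (X : End ℂ V) ∈ skewAdjointStabilizer B K ∧ IsUnit (1 + X)}
  have hD : IsPreconnected D := isPreconnected_setOf_mem_and_isUnit_one_add
    ((skewAdjointStabilizer B K).comap (ContinuousLinearMap.coeLM ℂ))
  have hcont : ContinuousOn cayleyTransform D :=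
    continuousOn_cayleyTransform.mono fun _ => And.right
  have hfst := hcont.comp continuousOn_fst (Set.mapsTo_fst_prod (t := D))
  have hsnd := hcont.comp continuousOn_snd (Set.mapsTo_snd_prod (s := D))
  have himage := (hD.prod hD).image _ (hfst.mul (hsnd.mul hsnd))
  convert himage using 1
  ext g
  rw [Set.mem_ofPred_eq, coe_mem_specialOrthogonalStabilizer_iff_exists_cayleyTransform hB hsymm hK]
  simp [D, and_assoc]

theorem isConnected_specialOrthogonalStabilizer_of_orthogonal_le (hB : B.Nondegenerate)
    (hsymm : B.IsSymm) (hK : B.orthogonal K ≤ K) :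
    IsConnected {g : V →L[ℂ] V | (g : End ℂ V) ∈ specialOrthogonalStabilizer B K} := by
  rw [← specialOrthogonalStabilizer_orthogonal hB hsymm.isRefl]
  apply isConnected_specialOrthogonalStabilizer hB hsymm
  rwa [LinearMap.BilinForm.orthogonal_orthogonal hB hsymm.isRefl]

end Topology

lemma le_or_ge_of_finrank_inf_eq_min {𝕜 V : Type*} [DivisionRing 𝕜] [AddCommGroup V] [Module 𝕜 V]
    [FiniteDimensional 𝕜 V] {K L : Submodule 𝕜 V}
    (h : finrank 𝕜 ↥(K ⊓ L) = min (finrank 𝕜 K) (finrank 𝕜 L)) : K ≤ L ∨ L ≤ K := by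
  rcases min_choice (finrank 𝕜 K) (finrank 𝕜 L) with hmin | hmin
  · exact .inl (inf_eq_left.1 (Submodule.eq_of_le_of_finrank_eq inf_le_left (h.trans hmin)))
  · exact .inr (inf_eq_right.1 (Submodule.eq_of_le_of_finrank_eq inf_le_right (h.trans hmin)))

lemma bperp_eq_orthogonal {V : Type*} [AddCommGroup V] [Module ℂ V]
    {B : LinearMap.BilinForm ℂ V} (hsymm : B.IsSymm) (H : Submodule ℂ V) :
    bperp B H = B.orthogonal H := by
  ext v
  exact forall₂_congr fun w _ => by rw [hsymm.eq]

/-- Proposition 3.9(3) (`prop:orbit-orth`), connected case: for a nondegenerate symmetric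
form, if `dim H = k`, `dim (H ∩ H^⊥) = k - r` and `r = max {0, 2k - n}`, then the stabilizer
of `H` in `SO(V)` is a connected subset of the endomorphism space.  (The canonical topology
of the finite-dimensional space `End V` is realized via an arbitrary norm on `V`.) -/
theorem stmt_8 {V : Type*} [NormedAddCommGroup V] [NormedSpace ℂ V] [FiniteDimensional ℂ V]
    (n : ℕ) (hn : finrank ℂ V = n)
    (B : V →ₗ[ℂ] V →ₗ[ℂ] ℂ)
    (hB : ∀ v, (∀ w, B v w = 0) → v = 0)
    (hsymm : ∀ v w, B v w = B w v)
    (H : Submodule ℂ V) (k r : ℕ) (hk : finrank ℂ H = k)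
    (hrad : (finrank ℂ ↥(H ⊓ bperp B H) : ℤ) = (k : ℤ) - r)
    (hr : (r : ℤ) = max 0 (2 * (k : ℤ) - n)) :
    IsConnected {g : V →L[ℂ] V |
      Function.Bijective g ∧ (∀ v w, B (g v) (g w) = B v w) ∧
      LinearMap.det (g : V →ₗ[ℂ] V) = 1 ∧
      Submodule.map (g : V →ₗ[ℂ] V) H = H} := by
  have hsymmB : LinearMap.BilinForm.IsSymm B := ⟨hsymm⟩
  have hnondeg : LinearMap.BilinForm.Nondegenerate B :=
    hsymmB.isRefl.nondegenerate_iff_separatingLeft.2 hB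
  have hcomparable : H ≤ LinearMap.BilinForm.orthogonal B H ∨
      LinearMap.BilinForm.orthogonal B H ≤ H := by
    apply le_or_ge_of_finrank_inf_eq_min
    have hperp := LinearMap.BilinForm.finrank_orthogonal hnondeg H
    have hle := H.finrank_le
    rw [bperp_eq_orthogonal hsymmB] at hrad
    omega
  have hstab : IsConnected {g : V →L[ℂ] V |
      (g : End ℂ V) ∈ specialOrthogonalStabilizer B H} :=
    hcomparable.elim (isConnected_specialOrthogonalStabilizer hnondeg hsymmB)
      (isConnected_specialOrthogonalStabilizer_of_orthogonal_le hnondeg hsymmB)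
  simpa only [mem_specialOrthogonalStabilizer_iff_map_eq hnondeg] using! hstab
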